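/- arXiv:2401.01365 — 7 statements merged into one kernel-verified Lean document; each statement's English description precedes it below -/
import Mathlib

section
/- Let K be a field, let f(x) in K[x] be an irreducible polynomial of degree n without repeated roots, and let K1/K be a finite Galois field extension whose degree [K1 : K] is relatively prime to n. Then f(x) remains irreducible over K1. -/
/-!
Let `g` be an irreducible factor of `f` over `K1` and put `L = K1[x]/(g)`. Since `L` contains a
root of `f`, the degree `n` divides `[L : K] = [K1 : K] * deg g`. As `n` is coprime to `[K1 : K]`,
it divides `deg g`, so `g` has the same degree as `f` and is associated to it.
-/

section

open Polynomial

theorem irreducible_of_forall_irreducible_dvd_natDegree_le {K : Type*} [Field K] {p : K[X]}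
    (hp : 0 < p.natDegree)
    (h : ∀ g : K[X], Irreducible g → g ∣ p → p.natDegree ≤ g.natDegree) : Irreducible p := by
  obtain ⟨g, hg, hgp⟩ := exists_irreducible_of_natDegree_pos hp
  have hassoc : Associated g p :=
    associated_of_dvd_of_natDegree_le hgp (ne_zero_of_natDegree_gt hp) (h g hg hgp)
  exact hassoc.irreducible hg

variable {K L : Type*} [Field K] [Field L] [Algebra K L] {f : K[X]}

theorem natDegree_dvd_finrank_of_aeval_eq_zero (hf : Irreducible f) {x : L}
    (hx : aeval x f = 0) : f.natDegree ∣ Module.finrank K L := by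
  have hint : IsIntegral K x := IsAlgebraic.isIntegral ⟨f, hf.ne_zero, hx⟩
  have hassoc : Associated (minpoly K x) f :=
    (minpoly.irreducible hint).associated_of_dvd hf (minpoly.dvd K x hx)
  rw [← natDegree_eq_of_degree_eq (degree_eq_degree_of_associated hassoc)]
  exact minpoly.degree_dvd hint

theorem natDegree_dvd_finrank_mul_natDegree_of_dvd_map (hf : Irreducible f) {g : L[X]}
    (hg : Irreducible g) (hgf : g ∣ f.map (algebraMap K L)) :
    f.natDegree ∣ Module.finrank K L * g.natDegree := by
  have : Fact (Irreducible g) := ⟨hg⟩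
  have hroot : aeval (AdjoinRoot.root g) f = 0 := by
    rw [← aeval_map_algebraMap L, AdjoinRoot.aeval_eq, AdjoinRoot.mk_eq_zero]
    exact hgf
  have hdeg : Module.finrank L (AdjoinRoot g) = g.natDegree :=
    finrank_quotient_span_eq_natDegree
  rw [← hdeg, Module.finrank_mul_finrank]
  exact natDegree_dvd_finrank_of_aeval_eq_zero hf hroot

end

theorem stmt2_general {K K1 : Type*} [Field K] [Field K1] [Algebra K K1]
    [FiniteDimensional K K1] (f : Polynomial K) (hirr : Irreducible f)
    (hco : Nat.Coprime (Module.finrank K K1) f.natDegree) :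
    Irreducible (f.map (algebraMap K K1)) := by
  apply irreducible_of_forall_irreducible_dvd_natDegree_le
  · rw [Polynomial.natDegree_map]
    exact hirr.natDegree_pos
  · intro g hg hgf
    have hdvd : f.natDegree ∣ g.natDegree :=
      hco.symm.dvd_of_dvd_mul_left (natDegree_dvd_finrank_mul_natDegree_of_dvd_map hirr hg hgf)
    rw [Polynomial.natDegree_map]
    exact Nat.le_of_dvd hg.natDegree_pos hdvd

/-- Let `K` be a field, `f ∈ K[x]` an irreducible polynomial of degree `n` without repeated
roots, and `K1/K` a finite Galois field extension whose degree `[K1 : K]` is relatively prime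
to `n`. Then `f` remains irreducible over `K1`. -/
theorem stmt2 {K K1 : Type*} [Field K] [Field K1] [Algebra K K1]
    [FiniteDimensional K K1] [IsGalois K K1]
    (f : Polynomial K) (hirr : Irreducible f) (hsep : f.Separable)
    (hco : Nat.Coprime (Module.finrank K K1) f.natDegree) :
    Irreducible (f.map (algebraMap K K1)) :=
  stmt2_general f hirr hco
end

section
/- Let K be a field, let f(x) in K[x] be an irreducible polynomial of degree n without repeated roots, and let K1/K be a finite Galois field extension whose degree [K1 : K] is relatively prime to n. Then n divides the order of the Galois group Gal(f/K1) of f over K1, i.e., the degree of the splitting field of f over K1. -/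
theorem natDegree_dvd_finrank_of_coprime_finrank {K L E : Type*} [Field K] [Field L] [Field E]
    [Algebra K L] [Algebra L E] [Algebra K E] [IsScalarTower K L E]
    {f : Polynomial K} (hirr : Irreducible f) (hsplits : (f.map (algebraMap K E)).Splits)
    (hco : Nat.Coprime (Module.finrank K L) f.natDegree) :
    f.natDegree ∣ Module.finrank L E := by
  have hdvd : f.natDegree ∣ Module.finrank K L * Module.finrank L E :=
    Module.finrank_mul_finrank K L E ▸
      Polynomial.Irreducible.natDegree_dvd_finrank hirr hsplits
  exact hco.symm.dvd_of_dvd_mul_left hdvd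

theorem stmt3_general {K L : Type*} [Field K] [Field L] [Algebra K L] [FiniteDimensional K L]
    (f : Polynomial K) (hirr : Irreducible f) (hsep : f.Separable)
    (hco : Nat.Coprime (Module.finrank K L) f.natDegree) :
    f.natDegree ∣ Nat.card (f.map (algebraMap K L)).Gal := by
  let E := (f.map (algebraMap K L)).SplittingField
  have hsplits : (f.map (algebraMap K E)).Splits := by
    rw [IsScalarTower.algebraMap_eq K L E, ← Polynomial.map_map]
    exact Polynomial.SplittingField.splits _
  have hcard : Nat.card (f.map (algebraMap K L)).Gal = Module.finrank L E :=
    Polynomial.Gal.card_of_separable hsep.map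
  rw [hcard]
  exact natDegree_dvd_finrank_of_coprime_finrank hirr hsplits hco

/-- Let `K` be a field, `f ∈ K[x]` an irreducible polynomial of degree `n` without repeated
roots, and `K1/K` a finite Galois field extension whose degree `[K1 : K]` is relatively prime
to `n`. Then `n` divides the order of the Galois group of `f` over `K1`, i.e. the degree of the
splitting field of `f` over `K1`. -/
theorem stmt3 {K K1 : Type*} [Field K] [Field K1] [Algebra K K1]
    [FiniteDimensional K K1] [IsGalois K K1]
    (f : Polynomial K) (hirr : Irreducible f) (hsep : f.Separable)
    (hco : Nat.Coprime (Module.finrank K K1) f.natDegree) :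
    f.natDegree ∣ Nat.card (f.map (algebraMap K K1)).Gal :=
  stmt3_general f hirr hsep hco
end

section
/- Let ell and r be two distinct odd primes and V a nonzero finite-dimensional vector space over the rationals. Let A and B be two commuting linear automorphisms of V such that A^ell and B^r both equal the identity automorphism of V, A minus the identity is an automorphism of V, and B is not the identity. Then the dimension of V over the rationals is at least (ell - 1)(r - 1). -/
/-!
Choose `w` with `B w ≠ w` and put `v = B w - w`, so that `Φ_ℓ(A) v = Φ_r(B) v = 0`. The quotient of
the commutative algebra `ℚ[A, B]` by the annihilator of `v` embeds in `V` via `s ↦ s v`; any residue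
field of that quotient has dimension at most `dim V`, and there `A` and `B` become primitive `ℓ`-th
and `r`-th roots of unity, so it contains the cyclotomic field `ℚ(ζ_{ℓr})`.
-/

open Polynomial

section TorsionQuotient

variable {K R M : Type*} [Field K] [CommRing R] [Algebra K R] [AddCommGroup M] [Module R M]
  [Module K M] [IsScalarTower K R M] [Module.Finite K M]

theorem finite_quotient_torsionOf (x : M) : Module.Finite K (R ⧸ Ideal.torsionOf R M x) :=
  have : Module.Finite K (Submodule.span R {x}) :=
    inferInstanceAs (Module.Finite K ((Submodule.span R {x}).restrictScalars K))
  .equiv ((Ideal.quotTorsionOfEquivSpanSingleton R M x).restrictScalars K).symm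

theorem finite_quotient_of_torsionOf_le {x : M} {I : Ideal R} (hI : Ideal.torsionOf R M x ≤ I) :
    Module.Finite K (R ⧸ I) :=
  have := finite_quotient_torsionOf (K := K) (R := R) x
  Module.Finite.of_surjective (Ideal.Quotient.factorₐ K hI).toLinearMap
    (Ideal.Quotient.factor_surjective hI)

theorem finrank_quotient_le_of_torsionOf_le {x : M} {I : Ideal R}
    (hI : Ideal.torsionOf R M x ≤ I) : Module.finrank K (R ⧸ I) ≤ Module.finrank K M := by
  have := finite_quotient_torsionOf (K := K) (R := R) x
  calc Module.finrank K (R ⧸ I)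
      ≤ Module.finrank K (R ⧸ Ideal.torsionOf R M x) :=
        LinearMap.finrank_le_finrank_of_surjective (f := (Ideal.Quotient.factorₐ K hI).toLinearMap)
          (Ideal.Quotient.factor_surjective hI)
    _ = Module.finrank K (Submodule.span R {x}) :=
        ((Ideal.quotTorsionOfEquivSpanSingleton R M x).restrictScalars K).finrank_eq
    _ ≤ Module.finrank K M := ((Submodule.span R {x}).restrictScalars K).finrank_le

end TorsionQuotient

theorem isPrimitiveRoot_of_aeval_cyclotomic_eq_zero {K L : Type*} [CommRing K] [CommRing L]
    [IsDomain L] [Algebra K L] [FaithfulSMul K L] {n : ℕ} [NeZero (n : K)] {x : L}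
    (hx : aeval x (cyclotomic n K) = 0) : IsPrimitiveRoot x n := by
  have : NeZero (n : L) := NeZero.of_faithfulSMul K L n
  rw [← isRoot_cyclotomic_iff, ← map_cyclotomic n (algebraMap K L), IsRoot.def,
    eval_map_algebraMap, hx]

section CyclotomicBound

variable {K : Type*} [Field K] {m n : ℕ} [NeZero (m : K)] [NeZero (n : K)]

theorem totient_lcm_le_finrank_of_smul_eq_zero {R M : Type*} [CommRing R] [Algebra K R]
    [AddCommGroup M] [Module R M] [Module K M] [IsScalarTower K R M] [Module.Finite K M]
    (hirr : Irreducible (cyclotomic (m.lcm n) K)) {a b : R} {v : M} (hv : v ≠ 0)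
    (ha : aeval a (cyclotomic m K) • v = 0) (hb : aeval b (cyclotomic n K) • v = 0) :
    (m.lcm n).totient ≤ Module.finrank K M := by
  obtain ⟨I, hI, hvI⟩ :=
    Ideal.exists_le_maximal _ (mt (Ideal.torsionOf_eq_top_iff R v).1 hv)
  let : Field (R ⧸ I) := Ideal.Quotient.field I
  have : Module.Finite K (R ⧸ I) := finite_quotient_of_torsionOf_le hvI
  have isPrimitiveRoot_mk {k : ℕ} [NeZero (k : K)] {c : R}
      (hc : aeval c (cyclotomic k K) • v = 0) :
      IsPrimitiveRoot (Ideal.Quotient.mkₐ K I c) k := by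
    apply isPrimitiveRoot_of_aeval_cyclotomic_eq_zero (K := K)
    rw [aeval_algHom_apply]
    exact Ideal.Quotient.eq_zero_iff_mem.2 (hvI hc)
  exact ((isPrimitiveRoot_mk ha).lcm_totient_le_finrank (isPrimitiveRoot_mk hb) hirr).trans
    (finrank_quotient_le_of_torsionOf_le hvI)

open scoped IsMulCommutative in
theorem totient_lcm_le_finrank_of_commute {V : Type*} [AddCommGroup V] [Module K V]
    [Module.Finite K V] (hirr : Irreducible (cyclotomic (m.lcm n) K)) {A B : Module.End K V}
    (hAB : Commute A B) {v : V} (hv : v ≠ 0)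
    (hA : aeval A (cyclotomic m K) v = 0) (hB : aeval B (cyclotomic n K) v = 0) :
    (m.lcm n).totient ≤ Module.finrank K V := by
  let S := Algebra.adjoin K {A, B}
  have : IsMulCommutative S := Algebra.isMulCommutative_adjoin K <| by
    rintro x (rfl | rfl) y (rfl | rfl)
    exacts [rfl, hAB, hAB.symm, rfl]
  let a : S := ⟨A, Algebra.subset_adjoin (by simp)⟩
  let b : S := ⟨B, Algebra.subset_adjoin (by simp)⟩
  have aeval_smul (c : S) (p : K[X]) : aeval c p • v = aeval (c : Module.End K V) p v := by
    rw [← S.val_apply c, aeval_algHom_apply, S.val_apply]; rfl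
  exact totient_lcm_le_finrank_of_smul_eq_zero hirr (a := a) (b := b) hv
    ((aeval_smul a _).trans hA) ((aeval_smul b _).trans hB)

end CyclotomicBound

section PrimeOrder

variable {K : Type*} [CommRing K] {p : ℕ}

theorem aeval_cyclotomic_prime_mul_sub_one {S : Type*} [Ring S] [Algebra K S] (hp : p.Prime)
    (x : S) : aeval x (cyclotomic p K) * (x - 1) = x ^ p - 1 := by
  have : Fact p.Prime := ⟨hp⟩
  simpa only [map_mul, map_sub, map_pow, aeval_X, map_one] using
    congrArg (aeval x) (cyclotomic_prime_mul_X_sub_one K p)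

theorem sub_one_mul_aeval_cyclotomic_prime {S : Type*} [Ring S] [Algebra K S] (hp : p.Prime)
    (x : S) : (x - 1) * aeval x (cyclotomic p K) = x ^ p - 1 := by
  have : Fact p.Prime := ⟨hp⟩
  simpa only [map_mul, map_sub, map_pow, aeval_X, map_one] using
    congrArg (aeval x) ((mul_comm _ _).trans (cyclotomic_prime_mul_X_sub_one K p))

variable {V : Type*} [AddCommGroup V] [Module K V] {T : Module.End K V}

theorem aeval_cyclotomic_prime_eq_zero (hp : p.Prime) (hT : T ^ p = 1)
    (hT1 : Function.Injective (T - 1 : Module.End K V)) : aeval T (cyclotomic p K) = 0 := by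
  have hmul : (T - 1) * aeval T (cyclotomic p K) = 0 := by
    rw [sub_one_mul_aeval_cyclotomic_prime hp, hT, sub_self]
  ext v
  exact hT1 ((LinearMap.congr_fun hmul v).trans (map_zero _).symm)

theorem exists_ne_zero_aeval_cyclotomic_prime_apply_eq_zero (hp : p.Prime) (hT : T ^ p = 1)
    (hT1 : T ≠ 1) : ∃ v ≠ 0, aeval T (cyclotomic p K) v = 0 := by
  have hmul : aeval T (cyclotomic p K) * (T - 1) = 0 := by
    rw [aeval_cyclotomic_prime_mul_sub_one hp, hT, sub_self]
  obtain ⟨w, hw⟩ := DFunLike.ne_iff.1 (sub_ne_zero.2 hT1)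
  exact ⟨(T - 1) w, hw, LinearMap.congr_fun hmul w⟩

end PrimeOrder

theorem stmt5_general {K V : Type*} [Field K] [AddCommGroup V] [Module K V] [Module.Finite K V]
    {p q : ℕ} [NeZero (p : K)] [NeZero (q : K)] (hp : p.Prime) (hq : q.Prime) (hpq : p ≠ q)
    (hirr : Irreducible (cyclotomic (p * q) K)) {A B : Module.End K V} (hAB : Commute A B)
    (hA : A ^ p = 1) (hB : B ^ q = 1)
    (hA1 : Function.Injective (A - 1 : Module.End K V)) (hB1 : B ≠ 1) :
    (p - 1) * (q - 1) ≤ Module.finrank K V := by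
  have hcop : p.Coprime q := (Nat.coprime_primes hp hq).2 hpq
  obtain ⟨v, hv, hBv⟩ := exists_ne_zero_aeval_cyclotomic_prime_apply_eq_zero hq hB hB1
  have hAv : aeval A (cyclotomic p K) v = 0 := by
    rw [aeval_cyclotomic_prime_eq_zero hp hA hA1, LinearMap.zero_apply]
  rw [← hcop.lcm_eq_mul] at hirr
  calc (p - 1) * (q - 1)
      = (p.lcm q).totient := by
        rw [hcop.lcm_eq_mul, Nat.totient_mul hcop, Nat.totient_prime hp, Nat.totient_prime hq]
    _ ≤ Module.finrank K V := totient_lcm_le_finrank_of_commute hirr hAB hv hAv hBv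

/-- Let `ℓ` and `r` be two distinct odd primes and `V` a nonzero finite-dimensional vector
space over `ℚ`. Let `A` and `B` be two commuting linear automorphisms of `V` such that
`A^ℓ = B^r = 1`, `A - 1` is an automorphism of `V`, and `B ≠ 1`. Then
`dim_ℚ V ≥ (ℓ - 1)(r - 1)`. -/
theorem stmt5 (ell r : ℕ) (hell : ell.Prime) (hr : r.Prime) (hellodd : Odd ell)
    (hrodd : Odd r) (hne : ell ≠ r)
    {V : Type*} [AddCommGroup V] [Module ℚ V] [FiniteDimensional ℚ V] [Nontrivial V]
    (A B : V ≃ₗ[ℚ] V) (hcomm : A * B = B * A)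
    (hA : A ^ ell = 1) (hB : B ^ r = 1)
    (hA1 : Function.Bijective (A.toLinearMap - (LinearMap.id : V →ₗ[ℚ] V)))
    (hB1 : B ≠ 1) :
    (ell - 1) * (r - 1) ≤ Module.finrank ℚ V := by
  have : NeZero ell := ⟨hell.ne_zero⟩
  have : NeZero r := ⟨hr.ne_zero⟩
  let φ : (V ≃ₗ[ℚ] V) →* Module.End ℚ V := LinearEquiv.automorphismGroup.toLinearMapMonoidHom
  exact stmt5_general hell hr hne (cyclotomic.irreducible_rat (Nat.mul_pos hell.pos hr.pos))
    (Commute.map hcomm φ) (by rw [← map_pow, hA, map_one]) (by rw [← map_pow, hB, map_one])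
    hA1.injective (LinearEquiv.toLinearMap_injective.ne hB1)
end

section
/- Let ell be a prime, R a finite set of cardinality n not divisible by ell, and G a group acting transitively on R. Let V be a finite-dimensional F_ell-vector space with a linear G-action admitting a filtration 0 = V_0 <= V_1 <= ... <= V_d = V by G-submodules such that G acts trivially on each successive quotient V_{i+1}/V_i (equivalently, every simple Jordan-Holder subquotient of V is a trivial G-module). Then every homomorphism of G-modules Q_R -> V is zero. -/
open Finset

/-- The "heart" of the permutation module `F_ℓ^R`: the submodule of functions
`φ : R → F_ℓ` with `∑ a, φ a = 0`. -/
def heart (ell : ℕ) (R : Type*) [Fintype R] : Submodule (ZMod ell) (R → ZMod ell) where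
  carrier := {φ | ∑ a, φ a = 0}
  add_mem' := by
    intro φ ψ hφ hψ
    simp only [Set.mem_setOf_eq, Pi.add_apply, Finset.sum_add_distrib] at *
    rw [hφ, hψ, add_zero]
  zero_mem' := by simp
  smul_mem' := by
    intro c φ hφ
    simp only [Set.mem_setOf_eq, Pi.smul_apply, smul_eq_mul, ← Finset.mul_sum] at *
    rw [hφ, mul_zero]

/-- The natural action of `g : G` on the heart `Q_R`, given by `(g • φ) a = φ (g⁻¹ • a)`. -/
def heartSmul {ell : ℕ} {R : Type*} [Fintype R] {G : Type*} [Group G] [MulAction G R]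
    (g : G) (φ : heart ell R) : heart ell R :=
  ⟨fun a => (φ : R → ZMod ell) (g⁻¹ • a), by
    have hφ : ∑ a, (φ : R → ZMod ell) a = 0 := φ.2
    show ∑ a, (φ : R → ZMod ell) (g⁻¹ • a) = 0
    rw [← hφ]
    exact Fintype.sum_equiv (MulAction.toPerm g⁻¹) _ _ (fun a => rfl)⟩

/-!
A homomorphism from a `G`-module `X` with image in `W (i + 1)` carries each `g x - x` into `W i`.
If these elements span `X`, that is, if the coinvariants `X_G` vanish, then the image descends all
the way to `W 0 = 0`. In the heart of `k^R`, with `n = |R|`, every `φ` satisfies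
`n φ = ∑ a, φ a • (n δ_a - 1)`; by transitivity all the `n δ_a - 1` have the same class `c` in the
coinvariants, so the class of `n φ` is `(∑ a, φ a) • c = 0`. Hence the coinvariants of the heart
vanish as soon as `n` is invertible.
-/

section UnipotentTarget

variable {k G X V : Type*} [CommRing k] [Monoid G] [AddCommGroup X] [Module k X]
  [AddCommGroup V] [Module k V] {σ : Representation k G X} {ρ : Representation k G V}

open Representation

theorem coinvariantsKer_le_comap (u : IntertwiningMap σ ρ) {A B : Submodule k V}
    (hAB : ∀ g : G, ∀ v ∈ B, ρ g v - v ∈ A) (hu : ∀ x, u x ∈ B) :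
    Coinvariants.ker σ ≤ A.comap u.toLinearMap := by
  refine Submodule.span_le.mpr ?_
  rintro _ ⟨⟨g, x⟩, rfl⟩
  change u (σ g x - x) ∈ A
  rw [map_sub, u.isIntertwining]
  exact hAB g (u x) (hu x)

theorem intertwiningMap_eq_zero_of_coinvariantsKer_eq_top (hσ : Coinvariants.ker σ = ⊤)
    {d : ℕ} (W : ℕ → Submodule k V) (h0 : W 0 = ⊥) (hd : W d = ⊤)
    (htriv : ∀ i < d, ∀ g : G, ∀ v ∈ W (i + 1), ρ g v - v ∈ W i)
    (u : IntertwiningMap σ ρ) : u = 0 := by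
  have map_mem : ∀ x, u x ∈ W 0 := by
    refine Nat.decreasingInduction (motive := fun i _ ↦ ∀ x, u x ∈ W i) ?_ ?_ d.zero_le
    · intro i hi hu x
      exact coinvariantsKer_le_comap u (htriv i hi) hu (hσ ▸ Submodule.mem_top)
    · simp only [hd, Submodule.mem_top, implies_true]
  refine DFunLike.ext u 0 fun x ↦ ?_
  exact (Submodule.mem_bot k).mp (h0 ▸ map_mem x)

end UnipotentTarget

section SumZero

variable (k G R : Type*) [CommRing k] [Group G] [MulAction G R]

/-- The permutation module `k^R` of all functions `R → k`, with `(g • φ) a = φ (g⁻¹ • a)`. Mathlib's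
`Representation.ofMulAction` is its counterpart on finitely supported functions. -/
def functionRep : Representation k G (R → k) where
  toFun g := LinearMap.funLeft k k (g⁻¹ • ·)
  map_one' := by ext; simp [LinearMap.funLeft]
  map_mul' g h := by ext; simp [LinearMap.funLeft, mul_smul]

variable [Fintype R]

/-- The heart of `k^R` over an arbitrary coefficient ring, as a subrepresentation. Its carrier is
spelled so as to agree definitionally with that of `heart ell R` when `k = ZMod ell`. -/
def sumZero : Subrepresentation (functionRep k G R) where
  toSubmodule :=
    { carrier := {φ | ∑ a, φ a = 0}
      add_mem' := by
        intro φ ψ (hφ : ∑ a, φ a = 0) (hψ : ∑ a, ψ a = 0)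
        simp [sum_add_distrib, hφ, hψ]
      zero_mem' := by simp
      smul_mem' := by
        intro c φ (hφ : ∑ a, φ a = 0)
        simp [← mul_sum, hφ] }
  apply_mem_toSubmodule g φ hφ :=
    (Fintype.sum_equiv (MulAction.toPerm g⁻¹) _ φ fun _ ↦ rfl).trans hφ

variable {R}

open Classical in
/-- The element `n δ_a - 1` of the heart, where `n = |R|`: the projection of the delta function
`δ_a` to the heart, scaled by `n` so that it exists over any ring. -/
noncomputable def centeredDelta (a : R) : (sumZero k G R).toSubmodule :=
  ⟨(Fintype.card R : k) • Pi.single a 1 - 1, by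
    change ∑ x, ((Fintype.card R : k) • (Pi.single a 1 : R → k) - 1) x = 0
    simp [← mul_sum]⟩

variable {k G}

theorem sumZero_toRepresentation_centeredDelta (g : G) (a : R) :
    (sumZero k G R).toRepresentation g (centeredDelta k G a) = centeredDelta k G (g • a) := by
  classical
  ext x
  change (Fintype.card R : k) * (Pi.single a 1 : R → k) (g⁻¹ • x) - 1 =
    (Fintype.card R : k) * (Pi.single (g • a) 1 : R → k) x - 1
  simp only [Pi.single_apply, inv_smul_eq_iff]

theorem card_smul_eq_sum_centeredDelta (φ : (sumZero k G R).toSubmodule) :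
    (Fintype.card R : k) • φ = ∑ a, φ.1 a • centeredDelta k G a := by
  classical
  have hφ : ∑ a, φ.1 a = 0 := φ.2
  ext x
  simp [centeredDelta, mul_comm _ (_ - _), sub_mul, sum_sub_distrib, hφ, Pi.single_apply]

open Representation

theorem card_smul_mem_coinvariantsKer [MulAction.IsPretransitive G R]
    (φ : (sumZero k G R).toSubmodule) :
    (Fintype.card R : k) • φ ∈ Coinvariants.ker (sumZero k G R).toRepresentation := by
  have hφ : ∑ a, φ.1 a = 0 := φ.2
  rw [card_smul_eq_sum_centeredDelta, ← Coinvariants.mk_eq_zero, map_sum]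
  obtain _ | ⟨⟨b⟩⟩ := isEmpty_or_nonempty R
  · exact Fintype.sum_empty _
  have mk_eq (a : R) : Coinvariants.mk (sumZero k G R).toRepresentation (centeredDelta k G a) =
      Coinvariants.mk _ (centeredDelta k G b) := by
    obtain ⟨g, rfl⟩ := MulAction.exists_smul_eq G b a
    rw [← sumZero_toRepresentation_centeredDelta, Coinvariants.mk_self_apply]
  simp only [map_smul, mk_eq, ← sum_smul, hφ, zero_smul]

theorem coinvariantsKer_sumZero_eq_top [MulAction.IsPretransitive G R]
    (hcard : IsUnit (Fintype.card R : k)) :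
    Coinvariants.ker (sumZero k G R).toRepresentation = ⊤ :=
  (Submodule.eq_top_iff').mpr fun φ ↦
    (Submodule.smul_mem_iff_of_isUnit _ hcard).mp (card_smul_mem_coinvariantsKer φ)

theorem stmt9_general [MulAction.IsPretransitive G R] (hcard : IsUnit (Fintype.card R : k))
    {V : Type*} [AddCommGroup V] [Module k V] (ρ : Representation k G V)
    {d : ℕ} (W : ℕ → Submodule k V) (h0 : W 0 = ⊥) (hd : W d = ⊤)
    (htriv : ∀ i < d, ∀ g : G, ∀ v ∈ W (i + 1), ρ g v - v ∈ W i)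
    (u : IntertwiningMap (sumZero k G R).toRepresentation ρ) : u = 0 :=
  intertwiningMap_eq_zero_of_coinvariantsKer_eq_top (coinvariantsKer_sumZero_eq_top hcard)
    W h0 hd htriv u

end SumZero

/-- Let `ℓ` be a prime, `R` a finite set of cardinality `n` not divisible by `ℓ`, and `G` a
group acting transitively on `R`. Let `V` be a finite-dimensional `F_ℓ`-vector space with a
linear `G`-action admitting a filtration `0 = V_0 ≤ V_1 ≤ ⋯ ≤ V_d = V` by `G`-submodules such
that `G` acts trivially on each successive quotient. Then every homomorphism of `G`-modules
`Q_R → V` is zero. -/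
theorem stmt9 (ell : ℕ) [hell : Fact ell.Prime] {R : Type*} [Fintype R]
    (hn : ¬ ell ∣ Fintype.card R)
    {G : Type*} [Group G] [MulAction G R] [MulAction.IsPretransitive G R]
    {V : Type*} [AddCommGroup V] [Module (ZMod ell) V] [FiniteDimensional (ZMod ell) V]
    (ρ : Representation (ZMod ell) G V)
    (d : ℕ) (W : ℕ → Submodule (ZMod ell) V)
    (h0 : W 0 = ⊥) (hd : W d = ⊤)
    (hmono : ∀ i < d, W i ≤ W (i + 1))
    (hWinv : ∀ i ≤ d, ∀ g : G, ∀ v ∈ W i, ρ g v ∈ W i)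
    (htriv : ∀ i < d, ∀ g : G, ∀ v ∈ W (i + 1), ρ g v - v ∈ W i)
    (u : heart ell R →ₗ[ZMod ell] V)
    (hequiv : ∀ (g : G) (φ : heart ell R), u (heartSmul g φ) = ρ g (u φ)) :
    u = 0 := by
  have hcard : IsUnit (Fintype.card R : ZMod ell) :=
    (ZMod.isUnit_iff_coprime _ _).mpr (hell.out.coprime_iff_not_dvd.mpr hn).symm
  exact congrArg (·.toLinearMap) (stmt9_general hcard ρ W h0 hd htriv
    (LinearMap.intertwiningMap_of_isIntertwiningMap _ ρ u hequiv))
end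

section
/- Let ell be a prime, R a finite set of cardinality n not divisible by ell, and G a group acting transitively on R. Let V be a finite-dimensional F_ell-vector space with a linear G-action admitting a filtration by G-submodules whose successive quotients all carry the trivial G-action. Let M be a finite-dimensional F_ell-vector space with a linear G-action admitting a filtration 0 = M_0 <= M_1 <= ... <= M_d = M by G-submodules such that every successive quotient M_{i+1}/M_i is isomorphic as a G-module to the heart Q_R. Then every homomorphism of G-modules M -> V is zero. -/
/-!
Write `I M` for the span of the elements `g m - m`, so that `M / I M` is the module of
coinvariants, and let `n = |R|`. For a function `φ` of sum zero,
`n φ = ∑ a, φ a • (n δ_a - 1)`, and transitivity makes all the `n δ_a - 1` equal modulo `I Q_R`;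
hence `n Q_R ⊆ I Q_R`. Climbing the filtration of `M`, each layer costs one factor `n`, so
`n ^ dM` maps `M` into `I M`. An equivariant map with values in a step of a filtration with
trivial quotients sends `I M` one step lower, so descending the filtration of `V` gives
`n ^ (dM * dV) • u = 0`, whatever the modulus `ell`. If `ell` is a prime not dividing `n`, this
forces `u = 0`.
-/

open Finset

section Coinvariants

open Representation

variable {k G M N : Type*} [CommRing k] [Monoid G]
  [AddCommGroup M] [Module k M] [AddCommGroup N] [Module k N]
  {ρ : Representation k G M} {σ : Representation k G N}

theorem map_coinvariantsKer_le_of_forall_sub_mem (f : IntertwiningMap ρ σ)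
    {L L' : Submodule k N} (hf : ∀ m, f m ∈ L') (hL : ∀ g, ∀ y ∈ L', σ g y - y ∈ L) :
    (Coinvariants.ker ρ).map f.toLinearMap ≤ L := by
  rw [Coinvariants.ker, Submodule.map_span_le]
  rintro _ ⟨⟨g, m⟩, rfl⟩
  simpa [f.isIntertwining] using hL g (f m) (hf m)

theorem map_coinvariantsKer_le (f : IntertwiningMap ρ σ) :
    (Coinvariants.ker ρ).map f.toLinearMap ≤ Coinvariants.ker σ :=
  map_coinvariantsKer_le_of_forall_sub_mem f (fun _ => Submodule.mem_top)
    fun g y _ => Coinvariants.sub_mem_ker g y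

theorem coinvariantsKer_le_map (f : IntertwiningMap ρ σ) (hf : Function.Surjective f) :
    Coinvariants.ker σ ≤ (Coinvariants.ker ρ).map f.toLinearMap := by
  rw [Coinvariants.ker, Submodule.span_le]
  rintro _ ⟨⟨g, y⟩, rfl⟩
  obtain ⟨m, rfl⟩ := hf y
  exact ⟨ρ g m - m, Coinvariants.sub_mem_ker g m, by simp [f.isIntertwining]⟩

/-- The inclusion of a subrepresentation, as a map of representations. -/
def subrepresentationInclusion (P : Subrepresentation ρ) :
    IntertwiningMap P.toRepresentation ρ where
  __ := P.toSubmodule.subtype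
  isIntertwining' _ := rfl

theorem smul_mem_sup_coinvariantsKer_of_surjective {r : k}
    (hr : ∀ y, r • y ∈ Coinvariants.ker σ)
    {P : Subrepresentation ρ} {L : Submodule k M} (p : IntertwiningMap P.toRepresentation σ)
    (hp : Function.Surjective p) (hL : ∀ x : P.toSubmodule, p x = 0 → (x : M) ∈ L)
    {m : M} (hm : m ∈ P.toSubmodule) :
    r • m ∈ L ⊔ Coinvariants.ker ρ := by
  let x : P.toSubmodule := ⟨m, hm⟩
  obtain ⟨y, hy, hpy⟩ := coinvariantsKer_le_map p hp (hr (p x))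
  have hdiff : ((r • x - y : P.toSubmodule) : M) ∈ L :=
    hL _ (by rw [map_sub, map_smul, sub_eq_zero]; exact hpy.symm)
  have hyρ : (y : M) ∈ Coinvariants.ker ρ :=
    map_coinvariantsKer_le (subrepresentationInclusion P) ⟨y, hy, rfl⟩
  exact Submodule.mem_sup.mpr ⟨_, hdiff, y, hyρ, sub_add_cancel (r • m) (y : M)⟩

theorem pow_smul_mem_coinvariantsKer {r : k} {W : ℕ → Submodule k M}
    (hW0 : W 0 ≤ Coinvariants.ker ρ) {d : ℕ}
    (hW : ∀ i < d, ∀ m ∈ W (i + 1), r • m ∈ W i ⊔ Coinvariants.ker ρ) :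
    ∀ m ∈ W d, r ^ d • m ∈ Coinvariants.ker ρ := by
  induction d with
  | zero =>
    intro m hm
    exact Submodule.smul_mem _ _ (hW0 hm)
  | succ d ih =>
    intro m hm
    obtain ⟨w, hw, c, hc, hwc⟩ := Submodule.mem_sup.mp (hW d d.lt_succ_self m hm)
    rw [pow_succ, mul_smul, ← hwc, smul_add]
    exact add_mem (ih (fun i hi => hW i (hi.trans d.lt_succ_self)) w hw)
      (Submodule.smul_mem _ _ hc)

theorem pow_smul_apply_mem_of_smul_mem_coinvariantsKer {r : k}
    (hr : ∀ m, r • m ∈ Coinvariants.ker ρ)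
    {W : ℕ → Submodule k N} {d : ℕ} (hW : ∀ i < d, ∀ g, ∀ y ∈ W (i + 1), σ g y - y ∈ W i)
    (f : IntertwiningMap ρ σ) (hf : ∀ m, f m ∈ W d) (m : M) :
    r ^ d • f m ∈ W 0 := by
  induction d generalizing f m with
  | zero => simpa only [pow_zero, one_smul] using hf m
  | succ d ih =>
    have hstep (m : M) : (r • f) m ∈ W d := by
      have hmap := map_coinvariantsKer_le_of_forall_sub_mem f hf (hW d d.lt_succ_self)
      rw [IntertwiningMap.coe_smul, Pi.smul_apply, ← map_smul]
      exact hmap ⟨r • m, hr m, rfl⟩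
    rw [pow_succ, mul_smul]
    exact ih (fun i hi => hW i (hi.trans d.lt_succ_self)) (r • f) hstep m

end Coinvariants

section Heart

variable (ell : ℕ) {R : Type*} [Fintype R]

/-- The function `|R| • δ_b - 1`, which is `|R|` times the projection of the indicator `δ_b` to
the heart along the constants; the scaling makes it available without inverting `|R|`. -/
def centeredSingle [DecidableEq R] (b : R) : heart ell R :=
  ⟨Pi.single b (Fintype.card R : ZMod ell) - 1, by
    change ∑ a, (Pi.single b (Fintype.card R : ZMod ell) - 1 : R → ZMod ell) a = 0
    simp⟩

variable {ell}

theorem card_smul_eq_sum_centeredSingle [DecidableEq R] (φ : heart ell R) :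
    (Fintype.card R : ZMod ell) • φ =
      ∑ a, (φ : R → ZMod ell) a • centeredSingle ell a := by
  have hφ : ∑ a, (φ : R → ZMod ell) a = 0 := φ.2
  ext x
  simp [centeredSingle, sub_mul, hφ, Pi.single_apply, mul_comm]

variable (ell R) (G : Type*) [Group G] [MulAction G R]

/-- The heart as a representation of `G`: the linear action underlying `heartSmul`. -/
def heartRepresentation : Representation (ZMod ell) G (heart ell R) where
  toFun g :=
    { toFun := heartSmul g
      map_add' _ _ := rfl
      map_smul' _ _ := rfl }
  map_one' := by
    ext φ a
    exact congrArg (φ : R → ZMod ell) (by rw [inv_one, one_smul])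
  map_mul' g h := by
    ext φ a
    exact congrArg (φ : R → ZMod ell) (by rw [mul_inv_rev, mul_smul])

variable {ell R G}

theorem heartRepresentation_apply_apply (g : G) (φ : heart ell R) (a : R) :
    (heartRepresentation ell R G g φ : R → ZMod ell) a = (φ : R → ZMod ell) (g⁻¹ • a) :=
  rfl

theorem heartRepresentation_centeredSingle [DecidableEq R] (g : G) (b : R) :
    heartRepresentation ell R G g (centeredSingle ell b) = centeredSingle ell (g • b) := by
  ext x
  simp [heartRepresentation_apply_apply, centeredSingle, Pi.single_apply, inv_smul_eq_iff]

open Representation in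
theorem card_smul_mem_coinvariantsKer_heart [MulAction.IsPretransitive G R] (φ : heart ell R) :
    (Fintype.card R : ZMod ell) • φ ∈ Coinvariants.ker (heartRepresentation ell R G) := by
  classical
  let q := Coinvariants.mk (heartRepresentation ell R G)
  have hq (a b : R) : q (centeredSingle ell a) = q (centeredSingle ell b) := by
    obtain ⟨g, rfl⟩ := MulAction.exists_smul_eq G a b
    rw [← heartRepresentation_centeredSingle, Coinvariants.mk_self_apply]
  have hφ : ∑ a, (φ : R → ZMod ell) a = 0 := φ.2
  rw [← Coinvariants.mk_eq_zero, card_smul_eq_sum_centeredSingle, map_sum]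
  rcases isEmpty_or_nonempty R with _ | ⟨⟨b⟩⟩
  · exact Fintype.sum_empty _
  · calc ∑ a, q ((φ : R → ZMod ell) a • centeredSingle ell a)
        = ∑ a, (φ : R → ZMod ell) a • q (centeredSingle ell b) := by
          simp only [map_smul, hq _ b]
      _ = 0 := by rw [← Finset.sum_smul, hφ, zero_smul]

end Heart

theorem stmt10_general (ell : ℕ) {R : Type*} [Fintype R]
    {G : Type*} [Group G] [MulAction G R] [MulAction.IsPretransitive G R]
    {V : Type*} [AddCommGroup V] [Module (ZMod ell) V]
    (ρV : Representation (ZMod ell) G V)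
    (dV : ℕ) (WV : ℕ → Submodule (ZMod ell) V)
    (hV0 : WV 0 = ⊥) (hVd : WV dV = ⊤)
    (hVtriv : ∀ i < dV, ∀ g : G, ∀ v ∈ WV (i + 1), ρV g v - v ∈ WV i)
    {M : Type*} [AddCommGroup M] [Module (ZMod ell) M]
    (ρM : Representation (ZMod ell) G M)
    (dM : ℕ) (WM : ℕ → Submodule (ZMod ell) M)
    (hM0 : WM 0 = ⊥) (hMd : WM dM = ⊤)
    (hMinv : ∀ i ≤ dM, ∀ g : G, ∀ m ∈ WM i, ρM g m ∈ WM i)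
    (hquot : ∀ i, ∀ hi : i < dM,
      ∃ e : (↥(WM (i + 1)) ⧸ Submodule.comap (WM (i + 1)).subtype (WM i))
          ≃ₗ[ZMod ell] heart ell R,
        ∀ (g : G) (m : WM (i + 1)),
          e (Submodule.Quotient.mk (⟨ρM g m, hMinv (i + 1) hi g m m.2⟩ : WM (i + 1))) =
            heartSmul g (e (Submodule.Quotient.mk m)))
    (u : M →ₗ[ZMod ell] V)
    (hequiv : ∀ (g : G) (m : M), u (ρM g m) = ρV g (u m)) :
    (Fintype.card R : ZMod ell) ^ (dM * dV) • u = 0 := by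
  have hlayer : ∀ i < dM, ∀ m ∈ WM (i + 1),
      (Fintype.card R : ZMod ell) • m ∈ WM i ⊔ Representation.Coinvariants.ker ρM := by
    intro i hi m hm
    obtain ⟨e, he⟩ := hquot i hi
    let P : Subrepresentation ρM := ⟨WM (i + 1), fun g _ => hMinv (i + 1) hi g _⟩
    let p : P.toRepresentation.IntertwiningMap (heartRepresentation ell R G) :=
      ⟨e.toLinearMap ∘ₗ Submodule.mkQ _, fun g => LinearMap.ext (he g)⟩
    refine smul_mem_sup_coinvariantsKer_of_surjective card_smul_mem_coinvariantsKer_heart p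
      (e.surjective.comp (Submodule.mkQ_surjective _)) (fun x hx => ?_) hm
    exact (Submodule.Quotient.mk_eq_zero ((WM i).comap P.toSubmodule.subtype)).mp
      (e.map_eq_zero_iff.mp hx)
  have hM (m : M) : (Fintype.card R : ZMod ell) ^ dM • m ∈ Representation.Coinvariants.ker ρM :=
    pow_smul_mem_coinvariantsKer (hM0.le.trans bot_le) hlayer m (hMd ▸ Submodule.mem_top)
  ext m
  have hu := pow_smul_apply_mem_of_smul_mem_coinvariantsKer hM hVtriv
    (u.intertwiningMap_of_isIntertwiningMap ρM ρV hequiv) (fun _ => hVd ▸ Submodule.mem_top) m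
  rw [hV0, Submodule.mem_bot, ← pow_mul] at hu
  exact hu

/-- Let `ℓ` be a prime, `R` a finite set of cardinality `n` not divisible by `ℓ`, and `G` a
group acting transitively on `R`. Let `V` be a finite-dimensional `F_ℓ`-vector space with a
linear `G`-action admitting a filtration by `G`-submodules with trivial successive quotients.
Let `M` be a finite-dimensional `F_ℓ`-vector space with a linear `G`-action admitting a
filtration `0 = M_0 ≤ M_1 ≤ ⋯ ≤ M_d = M` by `G`-submodules all of whose successive quotients
are isomorphic, as `G`-modules, to the heart `Q_R`. Then every homomorphism of `G`-modules
`M → V` is zero. -/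
theorem stmt10 (ell : ℕ) [hell : Fact ell.Prime] {R : Type*} [Fintype R]
    (hn : ¬ ell ∣ Fintype.card R)
    {G : Type*} [Group G] [MulAction G R] [MulAction.IsPretransitive G R]
    {V : Type*} [AddCommGroup V] [Module (ZMod ell) V] [FiniteDimensional (ZMod ell) V]
    (ρV : Representation (ZMod ell) G V)
    (dV : ℕ) (WV : ℕ → Submodule (ZMod ell) V)
    (hV0 : WV 0 = ⊥) (hVd : WV dV = ⊤)
    (hVmono : ∀ i < dV, WV i ≤ WV (i + 1))
    (hVinv : ∀ i ≤ dV, ∀ g : G, ∀ v ∈ WV i, ρV g v ∈ WV i)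
    (hVtriv : ∀ i < dV, ∀ g : G, ∀ v ∈ WV (i + 1), ρV g v - v ∈ WV i)
    {M : Type*} [AddCommGroup M] [Module (ZMod ell) M] [FiniteDimensional (ZMod ell) M]
    (ρM : Representation (ZMod ell) G M)
    (dM : ℕ) (WM : ℕ → Submodule (ZMod ell) M)
    (hM0 : WM 0 = ⊥) (hMd : WM dM = ⊤)
    (hMmono : ∀ i < dM, WM i ≤ WM (i + 1))
    (hMinv : ∀ i ≤ dM, ∀ g : G, ∀ m ∈ WM i, ρM g m ∈ WM i)
    (hquot : ∀ i, ∀ hi : i < dM,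
      ∃ e : (↥(WM (i + 1)) ⧸ Submodule.comap (WM (i + 1)).subtype (WM i))
          ≃ₗ[ZMod ell] heart ell R,
        ∀ (g : G) (m : WM (i + 1)),
          e (Submodule.Quotient.mk (⟨ρM g m, hMinv (i + 1) hi g m m.2⟩ : WM (i + 1))) =
            heartSmul g (e (Submodule.Quotient.mk m)))
    (u : M →ₗ[ZMod ell] V)
    (hequiv : ∀ (g : G) (m : M), u (ρM g m) = ρV g (u m)) :
    u = 0 := by
  have hcard : (Fintype.card R : ZMod ell) ≠ 0 := mt (ZMod.natCast_eq_zero_iff _ _).mp hn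
  exact (smul_eq_zero.mp (stmt10_general ell ρV dV WV hV0 hVd hVtriv ρM dM WM hM0 hMd hMinv hquot
    u hequiv)).resolve_left (pow_ne_zero _ hcard)
end

section
/- Let ell be an odd prime and n >= 3 an odd integer. Then the polynomial x^n - 2 is irreducible over the ell-th cyclotomic field Q(zeta_ell). -/
open Polynomial

/-!
If a prime `P` has ramification index one over `p`, then `P ^ 2` contracts to `p ^ 2`, so a
polynomial which is Eisenstein at `p` remains Eisenstein at `P`, and Gauss's lemma makes it
irreducible over the fraction field upstairs. A prime `q ∤ m` is unramified in the `m`-th cyclotomic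
field, and `X ^ n - a` is Eisenstein at `q` as soon as `q` divides `a` exactly once.
-/

section Dedekind

variable {R S : Type*} [CommRing R] [CommRing S] [IsDedekindDomain R] [IsDedekindDomain S]
  [Algebra R S] [FaithfulSMul R S] {p : Ideal R} {P : Ideal S} [P.IsPrime] [P.LiesOver p]

theorem algebraMap_mem_pow_iff_of_ramificationIdx_eq_one (hp : p ≠ ⊥)
    (he : P.ramificationIdx R = 1) {x : R} {k : ℕ} :
    algebraMap R S x ∈ P ^ k ↔ x ∈ p ^ k := by
  rcases eq_or_ne x 0 with rfl | hx
  · simp only [map_zero, zero_mem]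
  have hp_prime : p.IsPrime := Ideal.over_def P p ▸ Ideal.IsPrime.under R P
  have hP : P ≠ ⊥ := Ideal.ne_bot_of_liesOver_of_ne_bot hp P
  have hmult : emultiplicity P (Ideal.span {algebraMap R S x}) =
      emultiplicity p (Ideal.span {x}) := by
    rw [← Set.image_singleton, ← Ideal.map_span,
      Ideal.IsDedekindDomain.emultiplicity_map_eq_ramificationIdx'_mul
        (Ideal.span_singleton_eq_bot.not.mpr hx) (Ideal.prime_of_isPrime hp hp_prime).irreducible
        (Ideal.prime_of_isPrime hP ‹_›).irreducible hP,
      Ideal.ramificationIdx'_eq_ramificationIdx p P hp, he, Nat.cast_one, one_mul]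
  rw [← Ideal.dvd_span_singleton, ← Ideal.dvd_span_singleton, pow_dvd_iff_le_emultiplicity,
    pow_dvd_iff_le_emultiplicity, hmult]

theorem isEisensteinAt_map_of_ramificationIdx_eq_one (hp : p ≠ ⊥)
    (he : P.ramificationIdx R = 1) {f : R[X]} (hf : f.IsEisensteinAt p) :
    (f.map (algebraMap R S)).IsEisensteinAt P where
  leading := by
    rw [leadingCoeff_map_of_injective (FaithfulSMul.algebraMap_injective R S),
      ← Ideal.mem_of_liesOver P p]
    exact hf.leading
  mem hn := by
    rw [natDegree_map_eq_of_injective (FaithfulSMul.algebraMap_injective R S)] at hn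
    rw [coeff_map, ← Ideal.mem_of_liesOver P p]
    exact hf.mem hn
  notMem := by
    rw [coeff_map, algebraMap_mem_pow_iff_of_ramificationIdx_eq_one hp he]
    exact hf.notMem

theorem irreducible_map_of_isEisensteinAt_of_ramificationIdx_eq_one (K : Type*) [Field K]
    [Algebra R K] [Algebra S K] [IsScalarTower R S K] [IsFractionRing S K]
    (he : P.ramificationIdx R = 1) {f : R[X]} (hf : f.IsEisensteinAt p) (hmonic : f.Monic)
    (hdeg : 0 < f.natDegree) :
    Irreducible (f.map (algebraMap R K)) := by
  have hp : p ≠ ⊥ := by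
    rintro rfl
    exact hf.notMem (Ideal.mem_bot.mp (hf.mem hdeg) ▸ zero_mem _)
  have hmonicS : (f.map (algebraMap R S)).Monic := hmonic.map _
  have hirr : Irreducible (f.map (algebraMap R S)) :=
    (isEisensteinAt_map_of_ramificationIdx_eq_one hp he hf).irreducible ‹P.IsPrime›
      hmonicS.isPrimitive (by rwa [hmonic.natDegree_map])
  rw [IsScalarTower.algebraMap_eq R S K, ← Polynomial.map_map]
  exact hmonicS.irreducible_iff_irreducible_map_fraction_map.mp hirr

end Dedekind

theorem isEisensteinAt_X_pow_sub_C {R : Type*} [CommRing R] {p : Ideal R} {a : R} (ha : a ∈ p)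
    (ha' : a ∉ p ^ 2) {n : ℕ} (hn : n ≠ 0) :
    (X ^ n - C a).IsEisensteinAt p := by
  have hp : p ≠ ⊤ := by
    rintro rfl
    exact ha' (by rw [Ideal.top_pow]; exact Submodule.mem_top)
  have : Nontrivial R := nontrivial_of_ne a 0 fun h ↦ ha' (h ▸ zero_mem _)
  refine (monic_X_pow_sub_C a hn).isEisensteinAt_of_mem_of_notMem hp (fun {k} hk ↦ ?_) ?_
  · rw [natDegree_X_pow_sub_C] at hk
    rw [coeff_sub, coeff_X_pow, if_neg hk.ne, zero_sub, neg_mem_iff, coeff_C]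
    split_ifs
    exacts [ha, zero_mem p]
  · rwa [coeff_sub, coeff_X_pow, if_neg hn.symm, zero_sub, neg_mem_iff, coeff_C_zero]

section Cyclotomic

variable {m q : ℕ} (K : Type*) [Field K] [Algebra ℚ K] [IsCyclotomicExtension {m} ℚ K]

theorem irreducible_map_of_isEisensteinAt_of_isCyclotomicExtension (hq : q.Prime) (hqm : ¬ q ∣ m)
    {f : ℤ[X]} (hf : f.IsEisensteinAt (Ideal.span {(q : ℤ)})) (hmonic : f.Monic)
    (hdeg : 0 < f.natDegree) :
    Irreducible (f.map (algebraMap ℤ K)) := by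
  have : NumberField K := IsCyclotomicExtension.numberField {m} ℚ K
  -- Mathlib's ramification results use this `ℚ`-algebra structure, which is only propositionally
  -- equal to the one carried by `CyclotomicField m ℚ`.
  have : @IsCyclotomicExtension {m} ℚ K _ _ DivisionRing.toRatAlgebra := by
    convert ‹IsCyclotomicExtension {m} ℚ K›
    exact Subsingleton.elim _ _
  have : Fact q.Prime := ⟨hq⟩
  have : NeZero m := ⟨fun h ↦ hqm (h ▸ dvd_zero q)⟩
  have : (Ideal.span {(q : ℤ)}).IsPrime := by
    simpa [Ideal.span_singleton_prime, hq.ne_zero] using Nat.prime_iff_prime_int.mp hq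
  obtain ⟨⟨P, _, _⟩⟩ :=
    (Ideal.span {(q : ℤ)}).nonempty_primesOver (S := NumberField.RingOfIntegers K)
  exact irreducible_map_of_isEisensteinAt_of_ramificationIdx_eq_one K
    (IsCyclotomicExtension.Rat.ramificationIdx_eq_of_not_dvd q K P hqm) hf hmonic hdeg

theorem stmt15_general (hq : q.Prime) (hqm : ¬ q ∣ m) {a : ℤ} (hqa : (q : ℤ) ∣ a)
    (hqa' : ¬ (q : ℤ) ^ 2 ∣ a) {n : ℕ} (hn : n ≠ 0) :
    Irreducible ((X : K[X]) ^ n - C (a : K)) := by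
  have heis : (X ^ n - C a).IsEisensteinAt (Ideal.span {(q : ℤ)}) := by
    refine isEisensteinAt_X_pow_sub_C ?_ ?_ hn
    · rwa [Ideal.mem_span_singleton]
    · rwa [Ideal.span_singleton_pow, Ideal.mem_span_singleton]
  simpa using irreducible_map_of_isEisensteinAt_of_isCyclotomicExtension K hq hqm heis
    (monic_X_pow_sub_C a hn) (by rw [natDegree_X_pow_sub_C]; exact hn.bot_lt)

end Cyclotomic

/-- Let `ℓ` be an odd prime and `n ≥ 3` an odd integer. Then the polynomial `x^n - 2` is
irreducible over the `ℓ`-th cyclotomic field `ℚ(ζ_ℓ)`. -/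
theorem stmt15 (p : ℕ+) (hp : (p : ℕ).Prime) (hodd : Odd (p : ℕ))
    (n : ℕ) (hn : 3 ≤ n) (hnodd : Odd n) :
    Irreducible ((X : Polynomial (CyclotomicField p ℚ)) ^ n - C 2) := by
  let := CyclotomicField.algebra p ℚ
  exact_mod_cast stmt15_general (CyclotomicField p ℚ) Nat.prime_two hodd.not_two_dvd_nat
    (a := 2) (by norm_num) (by norm_num) (by omega : n ≠ 0)
end

section
/- Let n >= 5 be an integer and f(x) a polynomial of degree n with rational coefficients and without repeated roots whose Galois group over Q is isomorphic to the symmetric group S_n. Let K be a finite abelian Galois extension of Q. Then the Galois group of f over K (i.e., the Galois group of the splitting field of f over K) is isomorphic to either S_n or the alternating group A_n; in particular, f remains irreducible over K. -/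
/-!
Let `E` be the splitting field of `f` over `K` and `r : Gal(E/F) → Sₙ` the action on the splitting
field of `f` over `F`. The group `Gal(E/K)` embeds into `Sₙ` through `r`, with image the normal
subgroup `r (ker (Gal(E/F) → Gal(K/F)))`. This image is nontrivial, as otherwise `Sₙ` would be a
quotient of the solvable group `Gal(K/F)`; hence for `n ≥ 5` it contains `Aₙ`, which is maximal
in `Sₙ`. Since `Aₙ` is transitive, `Gal(E/K)` permutes the roots of `f` transitively.
-/

open Polynomial IntermediateField

section Group

variable {G H S : Type*} [Group G] [Group H] [Group S]

theorem isSolvable_of_ker_le_ker [Group.IsSolvable S] (π : G →* S) {r : G →* H}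
    (hr : Function.Surjective r) (hker : π.ker ≤ r.ker) : Group.IsSolvable H := by
  obtain ⟨k, hk⟩ := (Group.isSolvable_def S).1 ‹_›
  have hπ : derivedSeries G k ≤ π.ker := by
    rw [← (derivedSeries G k).map_eq_bot_iff, eq_bot_iff, ← hk]
    exact map_derivedSeries_le_derivedSeries π k
  refine ⟨⟨k, ?_⟩⟩
  rw [← map_derivedSeries_eq hr, Subgroup.map_eq_bot_iff]
  exact hπ.trans hker

variable {α : Type*} [Fintype α] [DecidableEq α]

theorem alternatingGroup_le_map_ker [Group.IsSolvable S] (hα : 5 ≤ Nat.card α) (π : G →* S)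
    {r : G →* Equiv.Perm α} (hr : Function.Surjective r) :
    alternatingGroup α ≤ π.ker.map r := by
  have : (π.ker.map r).Normal := π.normal_ker.map r hr
  refine Equiv.Perm.alternatingGroup_le_of_normal hα ?_
  rw [Subgroup.nontrivial_iff_ne_bot, Ne, Subgroup.map_eq_bot_iff]
  intro hker
  refine Equiv.Perm.not_isSolvable α ?_ (isSolvable_of_ker_le_ker π hr hker)
  rw [← Nat.cast_card]
  exact_mod_cast hα

theorem isCoatom_of_prime_index {N : Subgroup G} (hN : N.index.Prime) : IsCoatom N := by
  refine ⟨fun h ↦ hN.ne_one (Subgroup.index_eq_one.2 h), fun M hNM ↦ ?_⟩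
  have hmul : N.relIndex M * M.index = N.index := Subgroup.relIndex_mul_index hNM.le
  have hrel : N.relIndex M ≠ 1 := fun h ↦ hNM.not_ge (Subgroup.relIndex_eq_one.1 h)
  rw [← hmul, Nat.prime_mul_iff] at hN
  exact Subgroup.index_eq_one.1 (by tauto)

theorem isCoatom_alternatingGroup [Nontrivial α] : IsCoatom (alternatingGroup α) :=
  isCoatom_of_prime_index (alternatingGroup.index_eq_two (α := α) ▸ Nat.prime_two)

theorem nonempty_mulEquiv_perm_or_alternatingGroup [Nontrivial α] {φ : G →* Equiv.Perm α}
    (hφ : Function.Injective φ) (hle : alternatingGroup α ≤ φ.range) :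
    Nonempty (G ≃* Equiv.Perm α) ∨ Nonempty (G ≃* alternatingGroup α) := by
  rcases isCoatom_alternatingGroup.le_iff.1 hle with h | h
  · exact .inl ⟨.ofBijective φ ⟨hφ, MonoidHom.range_eq_top.1 h⟩⟩
  · exact .inr ⟨(MonoidHom.ofInjective hφ).trans (.subgroupCongr h)⟩

end Group

theorem irreducible_of_forall_exists_algEquiv {K E : Type*} [Field K] [Field E] [Algebra K E]
    {p : K[X]} (hsep : p.Separable) (hdeg : p.degree ≠ 0)
    (hsplit : (p.map (algebraMap K E)).Splits)
    (htrans : ∀ x ∈ p.rootSet E, ∀ y ∈ p.rootSet E, ∃ σ : Gal(E/K), σ x = y) : Irreducible p := by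
  obtain ⟨x, hx⟩ := hsplit.exists_eval_eq_zero (by rwa [degree_map])
  rw [eval_map_algebraMap] at hx
  have hxint : IsIntegral K x := IsAlgebraic.isIntegral ⟨p, hsep.ne_zero, hx⟩
  obtain ⟨q, hpq⟩ := minpoly.dvd K x hx
  suffices hq : IsUnit q by
    rw [hpq, irreducible_mul_isUnit hq]
    exact minpoly.irreducible hxint
  by_contra hq
  have hqsplit : (q.map (algebraMap K E)).Splits :=
    hsplit.of_dvd (Polynomial.map_ne_zero hsep.ne_zero)
      ((map_dvd_map' _).2 ⟨_, hpq.trans (mul_comm _ _)⟩)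
  obtain ⟨y, hy⟩ := hqsplit.exists_eval_eq_zero
    (by rwa [degree_map, Ne, ← isUnit_iff_degree_eq_zero])
  rw [eval_map_algebraMap] at hy
  have hyp : aeval y p = 0 := by rw [hpq, map_mul, hy, mul_zero]
  obtain ⟨σ, rfl⟩ := htrans x (mem_rootSet.2 ⟨hsep.ne_zero, hx⟩) y
    (mem_rootSet.2 ⟨hsep.ne_zero, hyp⟩)
  have hyx : aeval (σ x) (minpoly K x) = 0 := minpoly.aeval_algHom K (σ : E →ₐ[K] E) x
  have hcoprime : IsCoprime (minpoly K x) q := Separable.isCoprime (by rwa [← hpq])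
  exact (aeval_ne_zero_of_isCoprime hcoprime (σ x)).elim (fun h ↦ h hyx) (fun h ↦ h hy)

section Compositum

variable {F K E : Type*} [Field F] [Field K] [Field E] [Algebra F K] [Algebra F E] [Algebra K E]
  [IsScalarTower F K E]

theorem rootSet_map_algebraMap (f : F[X]) :
    (f.map (algebraMap F K)).rootSet E = f.rootSet E := by
  simp only [rootSet, aroots_map]

theorem range_restrictScalarsHom [Normal F K] :
    (AlgEquiv.restrictScalarsHom F : Gal(E/K) →* Gal(E/F)).range =
      (AlgEquiv.restrictNormalHom K : Gal(E/F) →* Gal(K/F)).ker := by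
  ext σ
  have hker : σ ∈ (AlgEquiv.restrictNormalHom K : Gal(E/F) →* Gal(K/F)).ker ↔
      ∀ a : K, σ (algebraMap K E a) = algebraMap K E a := by
    simp only [MonoidHom.mem_ker, AlgEquiv.ext_iff, AlgEquiv.one_apply,
      ← σ.restrictNormal_commutes K, (algebraMap K E).injective.eq_iff]
    rfl
  rw [hker]
  constructor
  · rintro ⟨τ, rfl⟩ a
    exact τ.commutes a
  · intro h
    exact ⟨AlgEquiv.ofRingEquiv (f := (σ : E ≃+* E)) h, rfl⟩

variable {f : F[X]} [hsplit : Fact (f.map (algebraMap F E)).Splits]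

theorem normal_of_adjoin_rootSet_eq_top [Normal F K]
    (hE : Algebra.adjoin K (f.rootSet E) = ⊤) : Normal F E := by
  let K' : IntermediateField F E := (IsScalarTower.toAlgHom F K E).fieldRange
  let L : IntermediateField F E := adjoin F (f.rootSet E)
  have : Normal F K' := .of_algEquiv (AlgEquiv.ofInjectiveField _)
  have : IsSplittingField F L f := adjoin_rootSet_isSplittingField hsplit.out
  have : Normal F L := .of_isSplittingField f
  have htop : K' ⊔ L = ⊤ := by
    refine eq_top_iff.2 fun x _ ↦ ?_
    have hx : x ∈ Algebra.adjoin K (f.rootSet E) := hE ▸ Algebra.mem_top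
    induction hx using Algebra.adjoin_induction with
    | mem x hx => exact (le_sup_right : L ≤ _) (subset_adjoin F _ hx)
    | algebraMap a => exact (le_sup_left : K' ≤ _) ⟨a, rfl⟩
    | add x y _ _ hx hy => exact add_mem (hx trivial) (hy trivial)
    | mul x y _ _ hx hy => exact mul_mem (hx trivial) (hy trivial)
  have : Normal F (⊤ : IntermediateField F E) := htop ▸ normal_sup F E K' L
  exact .of_algEquiv topEquiv

variable (f K E) in
/-- The restriction homomorphism `Gal(E/K) → Gal(L/F)`, where `L` is the splitting field of `f`
over `F`; it is used when `E` is the compositum `KL`. -/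
noncomputable def restrictToGal : Gal(E/K) →* f.Gal :=
  (Gal.restrict f E).comp (AlgEquiv.restrictScalarsHom F)

theorem galActionHom_restrictToGal (σ : Gal(E/K)) (x : f.rootSet E) :
    (Gal.galActionHom f E (restrictToGal K E f σ) x : E) = σ x :=
  Gal.galActionHom_restrict f E (AlgEquiv.restrictScalarsHom F σ) x

theorem restrictToGal_injective (hE : Algebra.adjoin K (f.rootSet E) = ⊤) :
    Function.Injective (restrictToGal K E f) := by
  intro σ τ h
  have hroots : ∀ x ∈ f.rootSet E, σ x = τ x := fun x hx ↦ by
    rw [← galActionHom_restrictToGal σ ⟨x, hx⟩, h, galActionHom_restrictToGal]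
  exact AlgEquiv.coe_toAlgHom_injective (AlgHom.ext_of_adjoin_eq_top hE hroots)

theorem alternatingGroup_le_range_comp_restrictToGal [Normal F K] [Group.IsSolvable Gal(K/F)]
    (hE : Algebra.adjoin K (f.rootSet E) = ⊤) {α : Type*} [Fintype α] [DecidableEq α]
    (hα : 5 ≤ Nat.card α) {φ : f.Gal →* Equiv.Perm α} (hφ : Function.Surjective φ) :
    alternatingGroup α ≤ (φ.comp (restrictToGal K E f)).range := by
  have : Normal F E := normal_of_adjoin_rootSet_eq_top hE
  rw [restrictToGal, ← MonoidHom.comp_assoc, MonoidHom.range_comp, range_restrictScalarsHom]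
  exact alternatingGroup_le_map_ker hα _ (hφ.comp (Gal.restrict_surjective f E))

theorem natCard_rootSet_eq_natDegree (hsep : f.Separable) :
    Nat.card (f.rootSet E) = f.natDegree := by
  rw [Nat.card_eq_fintype_card, card_rootSet_eq_natDegree hsep hsplit.out]

variable (E) in
theorem galActionHom_surjective_of_mulEquiv_perm (hsep : f.Separable)
    (e : f.Gal ≃* Equiv.Perm (Fin f.natDegree)) : Function.Surjective (Gal.galActionHom f E) := by
  refine ((Nat.bijective_iff_injective_and_card _).2 ⟨Gal.galActionHom_injective f E, ?_⟩).2
  rw [Nat.card_congr e.toEquiv, Nat.card_perm, Nat.card_perm, natCard_rootSet_eq_natDegree hsep,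
    Nat.card_fin]

theorem irreducible_map_of_galActionHom_surjective [Normal F K] [Group.IsSolvable Gal(K/F)]
    (hE : Algebra.adjoin K (f.rootSet E) = ⊤) (hsep : f.Separable) (hdeg : 5 ≤ f.natDegree)
    (hf : Function.Surjective (Gal.galActionHom f E)) :
    Irreducible (f.map (algebraMap F K)) := by
  classical
  have hroots : Nat.card (f.rootSet E) = f.natDegree := natCard_rootSet_eq_natDegree hsep
  have := alternatingGroup.isPretransitive_of_three_le_card (f.rootSet E) (by omega)
  refine irreducible_of_forall_exists_algEquiv (E := E) hsep.map ?_ ?_ ?_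
  · rw [degree_map]
    exact (natDegree_pos_iff_degree_pos.1 (by omega)).ne'
  · rw [Polynomial.map_map, ← IsScalarTower.algebraMap_eq]
    exact hsplit.out
  · rw [rootSet_map_algebraMap]
    intro x hx y hy
    obtain ⟨s, hs⟩ := MulAction.exists_smul_eq (alternatingGroup (f.rootSet E))
      (⟨x, hx⟩ : f.rootSet E) ⟨y, hy⟩
    obtain ⟨σ, hσ⟩ := alternatingGroup_le_range_comp_restrictToGal hE (hroots ▸ hdeg) hf s.2
    refine ⟨σ, (galActionHom_restrictToGal σ ⟨x, hx⟩).symm.trans ?_⟩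
    exact congrArg Subtype.val ((DFunLike.congr_fun hσ _).trans hs)

end Compositum

theorem stmt16_general {F K : Type*} [Field F] [Field K] [Algebra F K] [Normal F K]
    [Group.IsSolvable Gal(K/F)] {n : ℕ} (hn : 5 ≤ n) {f : F[X]} (hdeg : f.natDegree = n)
    (hsep : f.Separable) (hgal : Nonempty (f.Gal ≃* Equiv.Perm (Fin n))) :
    (Nonempty ((f.map (algebraMap F K)).Gal ≃* Equiv.Perm (Fin n)) ∨
        Nonempty ((f.map (algebraMap F K)).Gal ≃* alternatingGroup (Fin n))) ∧
      Irreducible (f.map (algebraMap F K)) := by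
  subst hdeg
  obtain ⟨e⟩ := hgal
  let E := (f.map (algebraMap F K)).SplittingField
  have : Fact (f.map (algebraMap F E)).Splits := ⟨by
    rw [IsScalarTower.algebraMap_eq F K E, ← Polynomial.map_map]
    exact SplittingField.splits _⟩
  have hE : Algebra.adjoin K (f.rootSet E) = ⊤ := by
    rw [← rootSet_map_algebraMap (K := K)]
    exact SplittingField.adjoin_rootSet _
  have : Nontrivial (Fin f.natDegree) := Fin.nontrivial_iff_two_le.2 (by omega)
  constructor
  · exact nonempty_mulEquiv_perm_or_alternatingGroup (G := Gal(E/K))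
      (φ := (e : f.Gal →* _).comp (restrictToGal K E f))
      (e.injective.comp (restrictToGal_injective hE))
      (alternatingGroup_le_range_comp_restrictToGal hE (by simpa) e.surjective)
  · exact irreducible_map_of_galActionHom_surjective hE hsep hn
      (galActionHom_surjective_of_mulEquiv_perm E hsep e)

/-- Let `n ≥ 5` and let `f ∈ ℚ[x]` be a degree-`n` polynomial without repeated roots whose
Galois group over `ℚ` is isomorphic to the symmetric group `S_n`. Let `K` be a finite abelian
Galois extension of `ℚ`. Then the Galois group of `f` over `K` (the Galois group of the
splitting field of `f` over `K`) is isomorphic to `S_n` or to the alternating group `A_n`;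
in particular, `f` remains irreducible over `K`. -/
theorem stmt16 (n : ℕ) (hn : 5 ≤ n) (f : Polynomial ℚ) (hdeg : f.natDegree = n)
    (hsep : f.Separable) (hgal : Nonempty (f.Gal ≃* Equiv.Perm (Fin n)))
    (K : Type*) [Field K] [Algebra ℚ K] [FiniteDimensional ℚ K] [IsGalois ℚ K]
    (habelian : ∀ σ τ : K ≃ₐ[ℚ] K, σ * τ = τ * σ) :
    (Nonempty ((f.map (algebraMap ℚ K)).Gal ≃* Equiv.Perm (Fin n)) ∨
        Nonempty ((f.map (algebraMap ℚ K)).Gal ≃* alternatingGroup (Fin n))) ∧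
      Irreducible (f.map (algebraMap ℚ K)) := by
  have : Group.IsSolvable Gal(K/ℚ) := Group.isSolvable_of_comm habelian
  exact stmt16_general hn hdeg hsep hgal
end
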